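/- Let K ⊆ ℂ be a compact set with connected complement, and let f be holomorphic on an open neighborhood of K. Then for every ε > 0 there exists a polynomial p with sup_{z ∈ K} |f(z) - p(z)| < ε. -/

import Mathlib

/-!
Let `P(K)` be the closure of the polynomials in `C(K, ℂ)` and let `z ∈ P(K)` be the coordinate
function. Since `Kᶜ` is connected, the spectrum of `z` does not grow when passing from `C(K, ℂ)` to
the smaller Banach algebra `P(K)`, so it equals `K`. Therefore the resolvent `(w - z)⁻¹` lies in
`P(K)` for every `w ∉ K`.

Extend `f` from a neighbourhood of `K` to a compactly supported `C¹` function `g`. As `∂g/∂z̄`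
vanishes near `K`, the `P(K)`-valued integral `-π⁻¹ ∫ (∂g/∂z̄)(w) (w - z)⁻¹ dA(w)` converges, and
by the Cauchy–Pompeiu formula its value at each point of `K` is that of `f`. Hence `f ∈ P(K)`.

The Cauchy–Pompeiu formula follows by integrating
`∂g/∂z̄ = (e^{iθ} / 2) (∂g/∂r + (i / r) ∂g/∂θ)` in polar coordinates around the evaluation point:
the radial part gives the value there, and the angular part vanishes by periodicity.
-/

open Complex MeasureTheory Set Filter Topology
open scoped ComplexConjugate Real

section CauchyPompeiu

variable {V W E : Type*} [NormedAddCommGroup V] [NormedSpace ℝ V]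
  [NormedAddCommGroup W] [NormedSpace ℝ W] [NormedAddCommGroup E] [NormedSpace ℂ E]

/-- The Wirtinger derivative `∂g/∂z̄ = (∂g/∂x + i ∂g/∂y) / 2`, which vanishes where `g` is
holomorphic. -/
noncomputable def dbar (g : ℂ → E) (w : ℂ) : E :=
  (2 : ℂ)⁻¹ • (fderiv ℝ g w 1 + I • fderiv ℝ g w I)

theorem continuous_dbar {g : ℂ → E} (hg : ContDiff ℝ 1 g) : Continuous (dbar g) := by
  have := hg.continuous_fderiv one_ne_zero
  unfold dbar
  fun_prop

theorem hasCompactSupport_dbar {g : ℂ → E} (hg : HasCompactSupport g) :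
    HasCompactSupport (dbar g) :=
  (hg.fderiv (𝕜 := ℝ)).mono <| Function.support_subset_iff'.2 fun w hw ↦ by
    simp [dbar, Function.notMem_support.1 hw]

theorem dbar_eq_zero_of_differentiableAt {g : ℂ → E} {w : ℂ} (hg : DifferentiableAt ℂ g w) :
    dbar g w = 0 := by
  have fderiv_I : fderiv ℝ g w I = I • fderiv ℝ g w 1 := by
    simp [hg.fderiv_restrictScalars ℝ]
  simp [dbar, fderiv_I, smul_smul]

theorem dbar_eventuallyEq {g h : ℂ → E} {w : ℂ} (hgh : g =ᶠ[𝓝 w] h) :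
    dbar g =ᶠ[𝓝 w] dbar h :=
  (hgh.fderiv (𝕜 := ℝ)).mono fun v hv ↦ by simp only [dbar, hv]

theorem dbar_comp_add_right (g : ℂ → E) (z w : ℂ) :
    dbar (fun v ↦ g (v + z)) w = dbar g (w + z) := by
  simp only [dbar, fderiv_comp_add_right]

theorem apply_add_I_smul_apply_I_mul (L : ℂ →L[ℝ] E) (u : ℂ) :
    L u + I • L (I * u) = conj u • (L 1 + I • L I) := by
  have apply_eq (v : ℂ) : L v = (v.re : ℂ) • L 1 + (v.im : ℂ) • L I := by
    rw [coe_smul, coe_smul, ← map_smul, ← map_smul, ← map_add]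
    congr 1
    simp [re_add_im]
  have conj_eq : conj u = u.re - u.im * I := by
    simpa [sub_eq_add_neg] using (re_add_im (conj u)).symm
  rw [apply_eq u, apply_eq (I * u), conj_eq]
  simp only [I_mul_re, I_mul_im]
  match_scalars
  · ring
  · linear_combination (u.im : ℂ) * I_mul_I

theorem integral_Ioi_fderiv_smul [CompleteSpace W] {g : V → W} (hg : ContDiff ℝ 1 g)
    (hc : HasCompactSupport g) {u : V} (hu : u ≠ 0) :
    ∫ r in Ioi (0 : ℝ), fderiv ℝ g (r • u) u = -g 0 := by
  have hderiv (r : ℝ) : HasDerivAt (fun s : ℝ ↦ g (s • u)) (fderiv ℝ g (r • u) u) r := by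
    have hline : HasDerivAt (fun s : ℝ ↦ s • u) u r := by
      simpa using (hasDerivAt_id r).smul_const u
    exact (hg.differentiable one_ne_zero _).hasFDerivAt.comp_hasDerivAt r hline
  have hcompact : HasCompactSupport fun s : ℝ ↦ g (s • u) :=
    hc.comp_isClosedEmbedding (isClosedEmbedding_smul_left hu)
  have hsmooth : ContDiff ℝ 1 fun s : ℝ ↦ g (s • u) := hg.comp (by fun_prop)
  simpa [(hderiv _).deriv] using hcompact.integral_Ioi_deriv_eq hsmooth 0

theorem integral_fderiv_I_mul_exp [CompleteSpace W] {g : ℂ → W} (hg : ContDiff ℝ 1 g) {r : ℝ}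
    (hr : r ≠ 0) :
    ∫ θ in -π..π, fderiv ℝ g (r • exp (θ * I)) (I * exp (θ * I)) = 0 := by
  have hderiv (θ : ℝ) : HasDerivAt (fun s : ℝ ↦ g (r • exp (s * I)))
      (r • fderiv ℝ g (r • exp (θ * I)) (I * exp (θ * I))) θ := by
    have hcircle : HasDerivAt (fun s : ℝ ↦ r • exp (s * I)) (r • (I * exp (θ * I))) θ := by
      have hexp : HasDerivAt (fun s : ℝ ↦ exp (s * I)) (I * exp (θ * I)) θ := by
        simpa [mul_comm] using ((ofRealCLM.hasDerivAt (x := θ)).mul_const I).cexp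
      exact hexp.const_smul r
    rw [← map_smul]
    exact (hg.differentiable one_ne_zero _).hasFDerivAt.comp_hasDerivAt θ hcircle
  have := hg.continuous_fderiv one_ne_zero
  have hFTC := intervalIntegral.integral_eq_sub_of_hasDerivAt (a := -π) (b := π)
    (fun θ _ ↦ hderiv θ) (Continuous.intervalIntegrable (by fun_prop) _ _)
  have hperiod : exp ((-π : ℝ) * I) = exp (π * I) := by
    simp [exp_neg]
  rw [hperiod, sub_self, intervalIntegral.integral_smul] at hFTC
  exact (smul_eq_zero.1 hFTC).resolve_left hr

theorem integrableOn_clm_apply_polar {F : ℂ → V →L[ℝ] W} (hF : Continuous F)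
    (hc : HasCompactSupport F) {v : ℝ → V} (hv : Continuous v) :
    IntegrableOn (fun p : ℝ × ℝ ↦ F (p.1 • exp (p.2 * I)) (v p.2))
      (Ioi 0 ×ˢ Ioo (-π) π) := by
  obtain ⟨R, hR⟩ := hc.isCompact.isBounded.subset_closedBall 0
  have hcont : Continuous fun p : ℝ × ℝ ↦ F (p.1 • exp (p.2 * I)) (v p.2) := by fun_prop
  have hint : IntegrableOn (fun p : ℝ × ℝ ↦ F (p.1 • exp (p.2 * I)) (v p.2))
      (Icc 0 R ×ˢ Icc (-π) π) :=
    hcont.continuousOn.integrableOn_compact (isCompact_Icc.prod isCompact_Icc)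
  refine hint.of_forall_sdiff_eq_zero (measurableSet_Ioi.prod measurableSet_Ioo) ?_
  rintro ⟨r, θ⟩ ⟨⟨hr, hθ⟩, hout⟩
  have hF0 : F (r • exp (θ * I)) = 0 := by
    refine image_eq_zero_of_notMem_tsupport fun hmem ↦ hout ?_
    have hrR : |r| ≤ R := by simpa [norm_exp_ofReal_mul_I] using hR hmem
    exact ⟨⟨le_of_lt hr, (le_abs_self r).trans hrR⟩, Ioo_subset_Icc_self hθ⟩
  simp only [hF0, zero_apply]

theorem setIntegral_polar_fderiv_radial [CompleteSpace W] {g : ℂ → W} (hg : ContDiff ℝ 1 g)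
    (hc : HasCompactSupport g) :
    ∫ p in Ioi (0 : ℝ) ×ˢ Ioo (-π) π,
      fderiv ℝ g (p.1 • exp (p.2 * I)) (exp (p.2 * I)) = -((2 * π) • g 0) := by
  have hint := integrableOn_clm_apply_polar (hg.continuous_fderiv one_ne_zero)
    (hc.fderiv (𝕜 := ℝ)) (v := fun θ ↦ exp (θ * I)) (by fun_prop)
  rw [Measure.volume_eq_prod, ← setIntegral_prod_swap]
  refine (setIntegral_prod _ hint.swap).trans ?_
  simp [-real_smul, integral_Ioi_fderiv_smul hg hc (exp_ne_zero _), Real.pi_pos.le, ← two_mul]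

theorem setIntegral_polar_fderiv_angular [CompleteSpace W] {g : ℂ → W} (hg : ContDiff ℝ 1 g)
    (hc : HasCompactSupport g) :
    ∫ p in Ioi (0 : ℝ) ×ˢ Ioo (-π) π,
      fderiv ℝ g (p.1 • exp (p.2 * I)) (I * exp (p.2 * I)) = 0 := by
  have hint := integrableOn_clm_apply_polar (hg.continuous_fderiv one_ne_zero)
    (hc.fderiv (𝕜 := ℝ)) (v := fun θ ↦ I * exp (θ * I)) (by fun_prop)
  rw [Measure.volume_eq_prod, setIntegral_prod _ hint]
  refine setIntegral_eq_zero_of_forall_eq_zero fun r hr ↦ ?_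
  rw [← integral_Ioc_eq_integral_Ioo,
    ← intervalIntegral.integral_of_le (neg_le_self Real.pi_pos.le)]
  exact integral_fderiv_I_mul_exp hg (ne_of_gt hr)

theorem smul_inv_smul_dbar_polar (g : ℂ → E) {r : ℝ} (hr : r ≠ 0) (θ : ℝ) :
    r • ((r • exp (θ * I))⁻¹ • dbar g (r • exp (θ * I))) =
      (2 : ℂ)⁻¹ • (fderiv ℝ g (r • exp (θ * I)) (exp (θ * I)) +
        I • fderiv ℝ g (r • exp (θ * I)) (I * exp (θ * I))) := by
  have conj_exp : conj (exp (θ * I)) = (exp (θ * I))⁻¹ := by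
    rw [← exp_conj, ← exp_neg]
    simp
  rw [apply_add_I_smul_apply_I_mul, conj_exp, smul_comm (2 : ℂ)⁻¹, ← smul_assoc, smul_inv₀,
    smul_inv_smul₀ hr, dbar]

theorem integral_inv_smul_dbar [CompleteSpace E] {g : ℂ → E} (hg : ContDiff ℝ 1 g)
    (hc : HasCompactSupport g) :
    ∫ w, w⁻¹ • dbar g w = -(π • g 0) := by
  have hcont := hg.continuous_fderiv one_ne_zero
  have hc' := hc.fderiv (𝕜 := ℝ)
  have hradial := integrableOn_clm_apply_polar hcont hc' (v := fun θ ↦ exp (θ * I)) (by fun_prop)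
  have hangular := integrableOn_clm_apply_polar hcont hc' (v := fun θ ↦ I * exp (θ * I))
    (by fun_prop)
  have hpolar : ∀ p ∈ Ioi (0 : ℝ) ×ˢ Ioo (-π) π,
      p.1 • ((Complex.polarCoord.symm p)⁻¹ • dbar g (Complex.polarCoord.symm p)) =
      (2 : ℂ)⁻¹ • (fderiv ℝ g (p.1 • exp (p.2 * I)) (exp (p.2 * I)) +
        I • fderiv ℝ g (p.1 • exp (p.2 * I)) (I * exp (p.2 * I))) := by
    rintro ⟨r, θ⟩ ⟨hr, -⟩
    have hsymm : Complex.polarCoord.symm (r, θ) = r • exp (θ * I) := by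
      simp [Complex.polarCoord_symm_apply, exp_mul_I, mul_add]
    rw [hsymm, smul_inv_smul_dbar_polar g (ne_of_gt hr)]
  calc ∫ w, w⁻¹ • dbar g w
      = ∫ p in Ioi (0 : ℝ) ×ˢ Ioo (-π) π,
          (2 : ℂ)⁻¹ • (fderiv ℝ g (p.1 • exp (p.2 * I)) (exp (p.2 * I)) +
            I • fderiv ℝ g (p.1 • exp (p.2 * I)) (I * exp (p.2 * I))) := by
        rw [← Complex.integral_comp_polarCoord_symm, polarCoord_target,
          setIntegral_congr_fun (measurableSet_Ioi.prod measurableSet_Ioo) hpolar]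
    _ = (2 : ℂ)⁻¹ • (-((2 * π) • g 0) + I • (0 : E)) := by
        rw [integral_smul, integral_add hradial (hangular.fun_smul I), integral_smul,
          setIntegral_polar_fderiv_radial hg hc, setIntegral_polar_fderiv_angular hg hc]
    _ = -(π • g 0) := by
        rw [← coe_smul, ← coe_smul]
        push_cast
        module

theorem integral_inv_sub_smul_dbar [CompleteSpace E] {g : ℂ → E} (hg : ContDiff ℝ 1 g)
    (hc : HasCompactSupport g) (z : ℂ) :
    ∫ w, (w - z)⁻¹ • dbar g w = -(π • g z) := by
  rw [← integral_add_right_eq_self _ z]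
  simpa [dbar_comp_add_right] using integral_inv_smul_dbar (g := fun v ↦ g (v + z))
    (hg.comp (contDiff_id.add contDiff_const)) (hc.comp_homeomorph (Homeomorph.addRight z))

end CauchyPompeiu

theorem exists_contDiff_hasCompactSupport_eventuallyEq {V E : Type*}
    [NormedAddCommGroup V] [NormedSpace ℝ V] [FiniteDimensional ℝ V]
    [NormedAddCommGroup E] [NormedSpace ℝ E] {n : ℕ∞} {f : V → E} {U K : Set V}
    (hf : ContDiffOn ℝ n f U) (hU : IsOpen U) (hK : IsCompact K) (hKU : K ⊆ U) :
    ∃ g : V → E, ContDiff ℝ n g ∧ HasCompactSupport g ∧ g =ᶠ[𝓝ˢ K] f := by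
  obtain ⟨L, hL, hKL, hLU⟩ := exists_compact_between hK hU hKU
  obtain ⟨χ, hχ_one, hχ_zero, -⟩ := exists_contMDiffMap_one_nhds_of_subset_interior (n := n)
    (modelWithCornersSelf ℝ V) hK.isClosed hKL
  refine ⟨fun w ↦ χ w • f w, contDiff_iff_contDiffAt.2 fun w ↦ ?_,
    HasCompactSupport.intro hL fun w hw ↦ by simp [hχ_zero w hw],
    hχ_one.mono fun w hw ↦ by simp [hw]⟩
  by_cases hw : w ∈ U
  · exact χ.contMDiff.contDiff.contDiffAt.smul (hf.contDiffAt (hU.mem_nhds hw))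
  · refine (contDiffAt_const (c := (0 : E))).congr_of_eventuallyEq ?_
    filter_upwards [hL.isClosed.isOpen_compl.mem_nhds fun hwL ↦ hw (hLU hwL)] with v hv
    simp [hχ_zero v hv]

section FunctionalCalculus

theorem map_resolvent_eq_inv_sub {𝕜 A : Type*} [Field 𝕜] [Ring A] [Algebra 𝕜 A] (φ : A →ₐ[𝕜] 𝕜)
    {a : A} {w : 𝕜} (hw : w ∈ resolventSet 𝕜 a) : φ (resolvent a w) = (w - φ a)⁻¹ := by
  refine eq_inv_of_mul_eq_one_left ?_
  have hmul : resolvent a w * (algebraMap 𝕜 A w - a) = 1 := Ring.inverse_mul_cancel _ hw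
  simpa using congrArg φ hmul

variable {A : Type*} [NormedRing A] [NormedAlgebra ℂ A] [CompleteSpace A]

theorem continuous_smul_resolvent {h : ℂ → ℂ} (hh : Continuous h) {a : A}
    (hzero : h =ᶠ[𝓝ˢ (spectrum ℂ a)] 0) : Continuous fun w ↦ h w • resolvent a w := by
  refine continuous_iff_continuousAt.2 fun w ↦ ?_
  by_cases hw : w ∈ spectrum ℂ a
  · have hlocal : (fun v ↦ h v • resolvent a v) =ᶠ[𝓝 w] fun _ ↦ 0 := by
      filter_upwards [hzero.filter_mono (nhds_le_nhdsSet hw)] with v hv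
      simp [hv]
    exact continuousAt_const.congr hlocal.symm
  · exact hh.continuousAt.smul
      (spectrum.hasDerivAt_resolvent_const_left (not_not.1 hw)).continuousAt

theorem map_integral_dbar_smul_resolvent {g : ℂ → ℂ} (hg : ContDiff ℝ 1 g)
    (hc : HasCompactSupport g) {a : A} (hzero : dbar g =ᶠ[𝓝ˢ (spectrum ℂ a)] 0)
    (φ : A →ₐ[ℂ] ℂ) :
    φ (∫ w, dbar g w • resolvent a w) = -(π * g (φ a)) := by
  have hint : Integrable fun w ↦ dbar g w • resolvent a w :=
    (continuous_smul_resolvent (continuous_dbar hg) hzero).integrable_of_hasCompactSupport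
      (hasCompactSupport_dbar hc).smul_right
  have happly (w : ℂ) : φ (dbar g w • resolvent a w) = (w - φ a)⁻¹ • dbar g w := by
    by_cases hw : w ∈ spectrum ℂ a
    · simp [Eventually.self_of_nhdsSet hzero w hw]
    · rw [map_smul, map_resolvent_eq_inv_sub φ (not_not.1 hw), smul_eq_mul, smul_eq_mul, mul_comm]
  calc φ (∫ w, dbar g w • resolvent a w)
      = ∫ w, φ (dbar g w • resolvent a w) := (φ.toContinuousLinearMap.integral_comp_comm hint).symm
    _ = -(π * g (φ a)) := by
      simp_rw [happly, integral_inv_sub_smul_dbar hg hc, real_smul]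

/-- `b` plays the role of `f(a)` in the holomorphic functional calculus, pinned down only through
its values at characters. -/
theorem exists_forall_algHom_apply_eq (a : A) {U : Set ℂ} (hU : IsOpen U)
    (haU : spectrum ℂ a ⊆ U) {f : ℂ → ℂ} (hf : DifferentiableOn ℂ f U) :
    ∃ b : A, ∀ φ : A →ₐ[ℂ] ℂ, φ b = f (φ a) := by
  obtain ⟨g, hg, hgc, hgf⟩ := exists_contDiff_hasCompactSupport_eventuallyEq (n := 1)
    ((hf.contDiffOn hU).restrict_scalars ℝ) hU (spectrum.isCompact a) haU
  have hzero : dbar g =ᶠ[𝓝ˢ (spectrum ℂ a)] 0 := by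
    refine eventually_nhdsSet_iff_forall.2 fun z hz ↦ ?_
    filter_upwards [dbar_eventuallyEq (hgf.filter_mono (nhds_le_nhdsSet hz)),
      hU.mem_nhds (haU hz)] with w hw hwU
    exact hw.trans (dbar_eq_zero_of_differentiableAt (hf.differentiableAt (hU.mem_nhds hwU)))
  refine ⟨(-(π : ℂ))⁻¹ • ∫ w, dbar g w • resolvent a w, fun φ ↦ ?_⟩
  have hpi : -(π : ℂ) ≠ 0 := by simp [Real.pi_ne_zero]
  rw [map_smul, map_integral_dbar_smul_resolvent hg hgc hzero, ← neg_mul, smul_eq_mul,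
    inv_mul_cancel_left₀ hpi, Eventually.self_of_nhdsSet hgf _ (AlgHom.apply_mem_spectrum φ a)]

end FunctionalCalculus

theorem exists_mem_subalgebra_forall_apply_eq {X : Type*} [TopologicalSpace X] [CompactSpace X]
    {S : Subalgebra ℂ C(X, ℂ)} (hS : IsClosed (S : Set C(X, ℂ))) {a : C(X, ℂ)} (ha : a ∈ S)
    (hconn : IsPreconnected (range a)ᶜ) {U : Set ℂ} (hU : IsOpen U) (haU : range a ⊆ U)
    {f : ℂ → ℂ} (hf : DifferentiableOn ℂ f U) :
    ∃ b ∈ S, ∀ x, b x = f (a x) := by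
  have : CompleteSpace S := hS.completeSpace_coe
  have hspec : spectrum ℂ (⟨a, ha⟩ : S) = range a := by
    rw [← ContinuousMap.spectrum_eq_range (𝕜 := ℂ)] at hconn ⊢
    exact Subalgebra.spectrum_eq_of_isPreconnected_compl S ⟨a, ha⟩ hconn
  obtain ⟨b, hb⟩ := exists_forall_algHom_apply_eq (⟨a, ha⟩ : S) hU (hspec.trans_subset haU) hf
  exact ⟨b, b.2, fun x ↦ hb ((ContinuousMap.evalAlgHom ℂ ℂ x).comp S.val)⟩

/-- Runge's polynomial approximation theorem. -/
theorem stmt_14 (K : Set ℂ) (hK : IsCompact K) (hKc : IsConnected Kᶜ)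
    (U : Set ℂ) (hU : IsOpen U) (hKU : K ⊆ U)
    (f : ℂ → ℂ) (hf : DifferentiableOn ℂ f U)
    (ε : ℝ) (hε : 0 < ε) :
    ∃ p : Polynomial ℂ, ∀ z ∈ K, ‖f z - p.eval z‖ < ε := by
  have : CompactSpace K := isCompact_iff_compactSpace.1 hK
  have hrange : range (Polynomial.toContinuousMapOn .X K) = K := by
    simp [Polynomial.toContinuousMapOn]
  have hX : Polynomial.toContinuousMapOn .X K ∈ (polynomialFunctions K).topologicalClosure :=
    Subalgebra.le_topologicalClosure _ ⟨.X, by simp⟩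
  obtain ⟨b, hb, hbf⟩ := exists_mem_subalgebra_forall_apply_eq
    (Subalgebra.isClosed_topologicalClosure _) hX (hrange.symm ▸ hKc.isPreconnected) hU
    (hrange.trans_subset hKU) hf
  obtain ⟨_, ⟨p, -, rfl⟩, hp⟩ := Metric.mem_closure_iff.1 hb ε hε
  refine ⟨p, fun z hz ↦ ?_⟩
  simpa [hbf, dist_eq_norm] using (ContinuousMap.dist_apply_le_dist (⟨z, hz⟩ : K)).trans_lt hp
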